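/- u(w) tends to p as w → +∞ and tends to 1 − p as w → −∞; moreover u(w₁*) > p, where w₁* = (ln p − ln(1 − p))/(2η). -/

import Mathlib

/-!
The limits follow from those of `Phi`, which is the CDF of `gaussianReal 0 1` (`Phi_eq_cdf`).
For the strict inequality, up to a positive factor the derivative of `u` at `w` is
`p * exp (-(w + η n)² / (2n)) - (1 - p) * exp (-(-w + η n)² / (2n))`, and the two exponents differ
by `2 η w`, so it is negative exactly when `w` exceeds `w₁* = (log p - log (1 - p)) / (2η)`.
Hence `u` is strictly decreasing on `[w₁*, ∞)`, and `u w₁*` lies strictly above the limit `p`.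
-/

/-- The standard normal CDF. -/
noncomputable def Phi (t : ℝ) : ℝ :=
  (Real.sqrt (2 * Real.pi))⁻¹ * ∫ s in Set.Iic t, Real.exp (-(s ^ 2) / 2)

/-- The expected clean accuracy `u(w)` for parameters `p`, `η`, `n`. -/
noncomputable def u (p η : ℝ) (n : ℕ) (w : ℝ) : ℝ :=
  p * Phi ((w + η * n) / Real.sqrt n) + (1 - p) * Phi ((-w + η * n) / Real.sqrt n)

theorem Phi_eq_cdf (t : ℝ) :
    Phi t = ProbabilityTheory.cdf (ProbabilityTheory.gaussianReal 0 1) t := by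
  rw [ProbabilityTheory.cdf_eq_real, MeasureTheory.measureReal_def,
    ProbabilityTheory.gaussianReal_apply_eq_integral _ one_ne_zero, ENNReal.toReal_ofReal]
  · simp [Phi, ProbabilityTheory.gaussianPDFReal, MeasureTheory.integral_const_mul]
  · exact MeasureTheory.integral_nonneg fun x => ProbabilityTheory.gaussianPDFReal_nonneg _ _ _

theorem tendsto_Phi_atTop : Filter.Tendsto Phi Filter.atTop (nhds 1) := by
  rw [funext Phi_eq_cdf]
  exact ProbabilityTheory.tendsto_cdf_atTop _

theorem tendsto_Phi_atBot : Filter.Tendsto Phi Filter.atBot (nhds 0) := by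
  rw [funext Phi_eq_cdf]
  exact ProbabilityTheory.tendsto_cdf_atBot _

theorem hasDerivAt_Phi (t : ℝ) :
    HasDerivAt Phi ((Real.sqrt (2 * Real.pi))⁻¹ * Real.exp (-(t ^ 2) / 2)) t := by
  have hint : MeasureTheory.Integrable (fun s : ℝ => Real.exp (-(s ^ 2) / 2)) := by
    convert integrable_exp_neg_mul_sq (b := 1 / 2) (by norm_num) using 3
    ring
  have hc : Continuous (fun s : ℝ => Real.exp (-(s ^ 2) / 2)) := by fun_prop
  have h := intervalIntegral.integral_hasDerivAt_right (hc.intervalIntegrable 0 t)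
    hc.stronglyMeasurable.stronglyMeasurableAtFilter hc.continuousAt
  have heq : Phi = fun x => (Real.sqrt (2 * Real.pi))⁻¹ *
      ((∫ s in (0 : ℝ)..x, Real.exp (-(s ^ 2) / 2)) +
        ∫ s in Set.Iic 0, Real.exp (-(s ^ 2) / 2)) := by
    funext x
    rw [← intervalIntegral.integral_Iic_sub_Iic hint.integrableOn hint.integrableOn,
      sub_add_cancel, Phi]
  rw [heq]
  exact (h.add_const _).const_mul _

theorem hasDerivAt_u (p η : ℝ) (n : ℕ) (w : ℝ) :
    HasDerivAt (u p η n) ((Real.sqrt (2 * Real.pi))⁻¹ / Real.sqrt n *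
      (p * Real.exp (-(((w + η * n) / Real.sqrt n) ^ 2) / 2) -
        (1 - p) * Real.exp (-(((-w + η * n) / Real.sqrt n) ^ 2) / 2))) w := by
  have h1 : HasDerivAt (fun w : ℝ => (w + η * n) / Real.sqrt n) (1 / Real.sqrt n) w :=
    ((hasDerivAt_id w).add_const _).div_const _
  have h2 : HasDerivAt (fun w : ℝ => (-w + η * n) / Real.sqrt n) (-1 / Real.sqrt n) w :=
    ((hasDerivAt_id w).neg.add_const _).div_const _
  have h := (((hasDerivAt_Phi _).comp w h1).const_mul p).add
    (((hasDerivAt_Phi _).comp w h2).const_mul (1 - p))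
  refine HasDerivAt.congr_deriv (f := u p η n) h ?_
  ring

theorem deriv_u_neg {p η : ℝ} {n : ℕ} (hp : 0 < p) (hp1 : p < 1) (hη : 0 < η) (hn : 0 < n)
    {w : ℝ} (hw : (Real.log p - Real.log (1 - p)) / (2 * η) < w) : deriv (u p η n) w < 0 := by
  have hn' : (0 : ℝ) < n := by exact_mod_cast hn
  rw [(hasDerivAt_u p η n w).deriv]
  refine mul_neg_of_pos_of_neg (by positivity) (sub_neg.mpr ?_)
  rw [div_lt_iff₀ (by positivity)] at hw
  rw [div_pow, div_pow, Real.sq_sqrt hn'.le]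
  -- Both coefficients are absorbed into the exponents, leaving `log p - log (1 - p) < 2 η w`.
  conv_lhs => rw [← Real.exp_log hp, ← Real.exp_add]
  conv_rhs => rw [← Real.exp_log (sub_pos.mpr hp1), ← Real.exp_add]
  rw [Real.exp_lt_exp]
  have e : -((w + η * n) ^ 2 / n) / 2 = -((-w + η * n) ^ 2 / n) / 2 - w * (2 * η) := by
    field_simp
    ring
  linarith

/-- `u(w) → p` as `w → +∞`, `u(w) → 1 − p` as `w → −∞`, and `u(w₁*) > p`. -/
theorem u_limits
    (p η : ℝ) (n : ℕ) (hp : 1 / 2 < p) (hp1 : p < 1) (hη : 0 < η) (hn : 0 < n) :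
    Filter.Tendsto (u p η n) Filter.atTop (nhds p) ∧
    Filter.Tendsto (u p η n) Filter.atBot (nhds (1 - p)) ∧
    p < u p η n ((Real.log p - Real.log (1 - p)) / (2 * η)) := by
  have hs : 0 < Real.sqrt n := Real.sqrt_pos.mpr (by exact_mod_cast hn)
  have htop : Filter.Tendsto (u p η n) Filter.atTop (nhds p) := by
    have h := ((tendsto_Phi_atTop.comp ((Filter.tendsto_atTop_add_const_right _ (η * n)
        Filter.tendsto_id).atTop_div_const hs)).const_mul p).add
      ((tendsto_Phi_atBot.comp ((Filter.tendsto_atBot_add_const_right _ (η * n)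
        Filter.tendsto_neg_atTop_atBot).atBot_div_const hs)).const_mul (1 - p))
    rw [mul_one, mul_zero, add_zero] at h
    exact h
  have hbot : Filter.Tendsto (u p η n) Filter.atBot (nhds (1 - p)) := by
    have h := ((tendsto_Phi_atBot.comp ((Filter.tendsto_atBot_add_const_right _ (η * n)
        Filter.tendsto_id).atBot_div_const hs)).const_mul p).add
      ((tendsto_Phi_atTop.comp ((Filter.tendsto_atTop_add_const_right _ (η * n)
        Filter.tendsto_neg_atBot_atTop).atTop_div_const hs)).const_mul (1 - p))
    rw [mul_one, mul_zero, zero_add] at h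
    exact h
  refine ⟨htop, hbot, ?_⟩
  set w₁ := (Real.log p - Real.log (1 - p)) / (2 * η) with hw₁
  have hanti : StrictAntiOn (u p η n) (Set.Ici w₁) := by
    refine strictAntiOn_of_deriv_neg (convex_Ici _)
      (fun x _ => (hasDerivAt_u p η n x).continuousAt.continuousWithinAt) fun x hx => ?_
    rw [interior_Ici] at hx
    exact deriv_u_neg (by linarith) hp1 hη hn hx
  have hle : w₁ ≤ w₁ + 1 := by linarith
  -- An intermediate point turns the weak inequality given by the limit into a strict one.
  have h1 : p ≤ u p η n (w₁ + 1) := by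
    refine le_of_tendsto htop ?_
    filter_upwards [Filter.eventually_ge_atTop (w₁ + 1)] with x hx
    exact hanti.antitoneOn hle (hle.trans hx) hx
  exact h1.trans_lt (hanti Set.self_mem_Ici hle (by linarith))
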